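/- Let G be a finite simple graph and let v be a vertex of G of degree at most 2. If the graph G − v obtained from G by deleting v is (2,1)-decomposable, then G is (2,1)-decomposable. (This is the reducibility behind Lemma 2.6(1): a vertex-minimal graph admitting no (2,1)-decomposition has minimum degree at least 3.) -/

import Mathlib

open SimpleGraph

/-- A graph `H` is `d`-degenerate: every induced subgraph on a nonempty vertex set
has a vertex of degree at most `d` (within that induced subgraph). -/
def Degenerate {V : Type*} (d : ℕ) (H : SimpleGraph V) : Prop :=
  ∀ s : Set V, s.Nonempty → ∃ v ∈ s, (H.neighborSet v ∩ s).ncard ≤ d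

/-- The graph `H` has maximum degree at most `h`. -/
def MaxDegreeLE {V : Type*} (h : ℕ) (H : SimpleGraph V) : Prop :=
  ∀ v : V, (H.neighborSet v).ncard ≤ h

/-- A graph `G` is `(d,h)`-decomposable: its edge set is partitioned into the edge
sets of two spanning subgraphs `H₁` and `H₂`, where `H₁` is `d`-degenerate and
`H₂` has maximum degree at most `h`. -/
def Decomposable {V : Type*} (d h : ℕ) (G : SimpleGraph V) : Prop :=
  ∃ H₁ H₂ : SimpleGraph V, H₁ ⊔ H₂ = G ∧ Disjoint H₁ H₂ ∧
    Degenerate d H₁ ∧ MaxDegreeLE h H₂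

/-!
Keep the bounded-degree part of a decomposition of `G - v` as it is and put every edge at `v` into
the degenerate part. A vertex set containing `v` then has `v` itself as a vertex of small degree,
and any other vertex set lives in `G - v`, where the degenerate part is unchanged.
-/

section

variable {V W : Type*} {d h : ℕ}

theorem MaxDegreeLE.map {H : SimpleGraph V} (hH : MaxDegreeLE h H) (f : V ↪ W) :
    MaxDegreeLE h (H.map f) := by
  intro w
  by_cases hw : w ∈ Set.range f
  · obtain ⟨u, rfl⟩ := hw
    rw [neighborSet_map, Set.ncard_image_of_injective _ f.injective]
    exact hH u
  · have hempty : (H.map f).neighborSet w = ∅ := by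
      refine Set.eq_empty_of_forall_notMem fun x hx ↦ hw ?_
      obtain ⟨u, -, -, hu, -⟩ := (map_adj f H w x).1 hx
      exact ⟨u, hu⟩
    simp [hempty]

theorem ncard_neighborSet_induce_inter_preimage (H : SimpleGraph V) {s t : Set V} (hts : t ⊆ s)
    (w : s) :
    ((H.induce s).neighborSet w ∩ Subtype.val ⁻¹' t).ncard = (H.neighborSet w ∩ t).ncard := by
  rw [neighborSet_induce, ← Set.preimage_inter]
  refine Set.ncard_preimage_of_injective_subset_range Subtype.val_injective ?_
  rw [Subtype.range_coe]
  exact Set.inter_subset_right.trans hts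

theorem Degenerate.exists_mem_ncard_le_of_subset {H : SimpleGraph V} {s t : Set V}
    (hH : Degenerate d (H.induce s)) (hts : t ⊆ s) (ht : t.Nonempty) :
    ∃ w ∈ t, (H.neighborSet w ∩ t).ncard ≤ d := by
  obtain ⟨a, ha⟩ := ht
  obtain ⟨w, hwt, hw⟩ := hH (Subtype.val ⁻¹' t) ⟨⟨a, hts ha⟩, ha⟩
  exact ⟨w, hwt, (ncard_neighborSet_induce_inter_preimage H hts w).symm.trans_le hw⟩

-- `encard` rather than `ncard`, which would take the value `0` at an infinite neighbourhood.
theorem Degenerate.of_induce_ne {H : SimpleGraph V} {v : V}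
    (hdeg : (H.neighborSet v).encard ≤ d) (hH : Degenerate d (H.induce {u | u ≠ v})) :
    Degenerate d H := by
  intro t ht
  by_cases hvt : v ∈ t
  · obtain ⟨hfin, hcard⟩ := Set.encard_le_coe_iff_finite_ncard_le.1 hdeg
    exact ⟨v, hvt, (Set.ncard_inter_le_ncard_left _ _ hfin).trans hcard⟩
  · exact hH.exists_mem_ncard_le_of_subset (fun _ hu ↦ ne_of_mem_of_not_mem hu hvt) ht

theorem induce_sdiff_spanningCoe {G : SimpleGraph V} {s : Set V} {H₁ H₂ : SimpleGraph s}
    (hsup : H₁ ⊔ H₂ = G.induce s) (hdisj : Disjoint H₁ H₂) :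
    (G \ H₂.spanningCoe).induce s = H₁ :=
  calc
    (G \ H₂.spanningCoe).induce s = G.induce s \ H₂.spanningCoe.induce s := rfl
    _ = (H₁ ⊔ H₂) \ H₂ := by rw [hsup, induce_spanningCoe]
    _ = H₁ := hdisj.sup_sdiff_cancel_right

theorem Decomposable.exists_extension {G : SimpleGraph V} {s : Set V}
    (hG : Decomposable d h (G.induce s)) :
    ∃ H₁ H₂ : SimpleGraph V, H₁ ⊔ H₂ = G ∧ Disjoint H₁ H₂ ∧
      Degenerate d (H₁.induce s) ∧ MaxDegreeLE h H₂ := by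
  obtain ⟨H₁, H₂, hsup, hdisj, hH₁, hH₂⟩ := hG
  have hle : H₂.spanningCoe ≤ G :=
    (map_le_iff_le_comap _ H₂ G).2 (le_sup_right.trans_eq hsup)
  refine ⟨G \ H₂.spanningCoe, H₂.spanningCoe, sdiff_sup_cancel hle, disjoint_sdiff_self_left,
    ?_, hH₂.map _⟩
  rwa [induce_sdiff_spanningCoe hsup hdisj]

theorem stmt_6_general {G : SimpleGraph V} {v : V} (hdeg : (G.neighborSet v).encard ≤ d)
    (hdec : Decomposable d h (G.induce {u | u ≠ v})) : Decomposable d h G := by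
  obtain ⟨H₁, H₂, hsup, hdisj, hH₁, hH₂⟩ := hdec.exists_extension
  have hle : H₁ ≤ G := le_sup_left.trans_eq hsup
  have hdeg₁ : (H₁.neighborSet v).encard ≤ d :=
    (Set.encard_le_encard fun _ hu ↦ hle hu).trans hdeg
  exact ⟨H₁, H₂, hsup, hdisj, .of_induce_ne hdeg₁ hH₁, hH₂⟩

end

theorem stmt_6 {V : Type*} [Fintype V] (G : SimpleGraph V) (v : V)
    (hdeg : (G.neighborSet v).ncard ≤ 2)
    (hdec : Decomposable 2 1 (G.induce {u : V | u ≠ v})) :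
    Decomposable 2 1 G :=
  stmt_6_general (Set.encard_le_coe_iff_finite_ncard_le.2 ⟨Set.toFinite _, hdeg⟩) hdec
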